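/- arXiv:1909.10571 — 4 statements merged into one kernel-verified Lean document; each statement's English description precedes it below -/
import Mathlib

section
/- Let a, b ∈ ℂ be ℝ-linearly independent and let G be the subgroup of (ℂ, +) generated over ℤ by a and b. Then G admits a geometric basis: there exist a', b' ∈ G that are ℝ-linearly independent, generate G over ℤ, and satisfy |a'| ≤ |n·a' + m·b'| for all integers (n, m) ≠ (0, 0) and |b'| ≤ |n·a' + m·b'| for all integers n, m with m ≠ 0. -/
/-!
A basis `(x, y)` of a planar lattice that minimizes `‖x‖ + ‖y‖` is geometric once its vectors are
ordered by norm: a shorter `y + n • x` would give a basis with smaller sum. Division with remainder,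
`n = m * k + r` with `0 ≤ r < |m|`, then bounds `‖n • x + m • y‖ = ‖m • (k • x + y) + r • x‖` from
below by `|m| * ‖y‖ - r * ‖x‖ ≥ ‖y‖`. A minimizer exists because a bounded set contains only
finitely many lattice points. The argument needs no inner product, so it works for every norm.
-/

open Bornology Submodule

section Reduction

variable {E : Type*} [SeminormedAddCommGroup E] [NormedSpace ℝ E] {x y : E}

theorem norm_le_norm_zsmul_self {n : ℤ} (hn : n ≠ 0) : ‖x‖ ≤ ‖n • x‖ := by
  rw [norm_zsmul ℝ, Real.norm_eq_abs]
  exact le_mul_of_one_le_left (norm_nonneg x) (mod_cast Int.one_le_abs hn)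

theorem norm_le_norm_zsmul_add_zsmul (hxy : ‖x‖ ≤ ‖y‖) (hy : ∀ k : ℤ, ‖y‖ ≤ ‖k • x + y‖)
    (n : ℤ) {m : ℤ} (hm : m ≠ 0) : ‖y‖ ≤ ‖n • x + m • y‖ := by
  have r_nonneg : (0 : ℝ) ≤ (n % m : ℤ) := mod_cast Int.emod_nonneg n hm
  have r_add_one_le : ((n % m : ℤ) : ℝ) + 1 ≤ |(m : ℝ)| := mod_cast Int.emod_lt_abs n hm
  have division : n • x + m • y = m • ((n / m) • x + y) + (n % m) • x := by
    nth_rw 1 [← Int.mul_ediv_add_emod n m]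
    module
  calc ‖y‖ ≤ (|(m : ℝ)| - (n % m : ℤ)) * ‖y‖ :=
        le_mul_of_one_le_left (norm_nonneg y) (by linarith)
    _ = |(m : ℝ)| * ‖y‖ - (n % m : ℤ) * ‖y‖ := sub_mul _ _ _
    _ ≤ |(m : ℝ)| * ‖(n / m) • x + y‖ - (n % m : ℤ) * ‖x‖ := by gcongr; exact hy (n / m)
    _ = ‖m • ((n / m) • x + y)‖ - ‖(n % m) • x‖ := by
        simp only [norm_zsmul ℝ, Real.norm_eq_abs, abs_of_nonneg r_nonneg]
    _ ≤ ‖n • x + m • y‖ := division ▸ norm_sub_le_norm_add _ _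

end Reduction

theorem finite_inter_closure_range_of_linearIndependent {E ι : Type*} [NormedAddCommGroup E]
    [NormedSpace ℝ E] [Finite ι] {v : ι → E} (hv : LinearIndependent ℝ v) {s : Set E}
    (hs : IsBounded s) : (s ∩ AddSubgroup.closure (Set.range v)).Finite := by
  classical
  cases nonempty_fintype ι
  let f : (ι → ℝ) →ₗ[ℝ] E := Fintype.linearCombination ℝ v
  obtain ⟨K, -, hf⟩ := f.injective_iff_antilipschitz.mp hv.fintypeLinearCombination_injective
  have map_standard_lattice :
      (span ℤ (Set.range (Pi.basisFun ℝ ι))).map (f.restrictScalars ℤ) = span ℤ (Set.range v) := by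
    rw [map_span, ← Set.range_comp]
    congr 2
    ext i
    simp [f, Fintype.linearCombination_apply_single]
  have image_standard_lattice :
      f '' span ℤ (Set.range (Pi.basisFun ℝ ι)) = AddSubgroup.closure (Set.range v) := by
    rw [← span_int_eq_addSubgroupClosure, coe_toAddSubgroup, ← map_standard_lattice]
    rfl
  rw [← image_standard_lattice, ← Set.image_preimage_inter]
  exact (ZSpan.setFinite_inter _ (hf.isBounded_preimage hs)).image f

/-- A `ℤ`-basis `(x, y)` of a lattice `G` of rank two in a real vector space. Membership of `x` and
`y` in `G` follows from `closure_eq`. -/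
structure IsLatticeBasis {E : Type*} [AddCommGroup E] [Module ℝ E] (G : AddSubgroup E)
    (x y : E) : Prop where
  linearIndependent : LinearIndependent ℝ ![x, y]
  closure_eq : AddSubgroup.closure {x, y} = G

namespace IsLatticeBasis

section Module

variable {E : Type*} [AddCommGroup E] [Module ℝ E] {G : AddSubgroup E} {x y : E}

theorem left_mem (h : IsLatticeBasis G x y) : x ∈ G :=
  h.closure_eq ▸ AddSubgroup.subset_closure (Set.mem_insert x {y})

theorem symm (h : IsLatticeBasis G x y) : IsLatticeBasis G y x where
  linearIndependent := LinearIndependent.pair_symm_iff.mp h.linearIndependent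
  closure_eq := Set.pair_comm x y ▸ h.closure_eq

theorem right_mem (h : IsLatticeBasis G x y) : y ∈ G :=
  h.symm.left_mem

theorem zsmul_add_right (h : IsLatticeBasis G x y) (k : ℤ) :
    IsLatticeBasis G x (k • x + y) where
  linearIndependent := (LinearIndependent.pair_add_smul_right_iff k).mpr h.linearIndependent
  closure_eq := by
    rw [← h.closure_eq]
    ext z
    simp only [AddSubgroup.mem_closure_pair]
    constructor
    · rintro ⟨m, n, rfl⟩
      exact ⟨m + n * k, n, by module⟩
    · rintro ⟨m, n, rfl⟩
      exact ⟨m - n * k, n, by module⟩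

end Module

variable {E : Type*} [NormedAddCommGroup E] [NormedSpace ℝ E] {G : AddSubgroup E} {a b : E}

theorem finite_inter (h : IsLatticeBasis G a b) {s : Set E} (hs : IsBounded s) :
    (s ∩ G).Finite := by
  rw [← h.closure_eq, ← Matrix.range_cons_cons_empty a b ![]]
  exact finite_inter_closure_range_of_linearIndependent h.linearIndependent hs

theorem exists_minimal_norm_add_norm (h : IsLatticeBasis G a b) :
    ∃ x y, IsLatticeBasis G x y ∧ ∀ x' y', IsLatticeBasis G x' y' → ‖x‖ + ‖y‖ ≤ ‖x'‖ + ‖y'‖ := by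
  let B := Metric.closedBall (0 : E) (‖a‖ + ‖b‖) ∩ G
  let S := {p : E × E | IsLatticeBasis G p.1 p.2 ∧ ‖p.1‖ + ‖p.2‖ ≤ ‖a‖ + ‖b‖}
  have hB : B.Finite := h.finite_inter Metric.isBounded_closedBall
  have hSB : S ⊆ B ×ˢ B := by
    rintro ⟨x, y⟩ ⟨hxy, hle⟩
    have hx : ‖x‖ ≤ ‖a‖ + ‖b‖ := (le_add_of_nonneg_right (norm_nonneg y)).trans hle
    have hy : ‖y‖ ≤ ‖a‖ + ‖b‖ := (le_add_of_nonneg_left (norm_nonneg x)).trans hle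
    exact ⟨⟨mem_closedBall_zero_iff.mpr hx, hxy.left_mem⟩,
      ⟨mem_closedBall_zero_iff.mpr hy, hxy.right_mem⟩⟩
  obtain ⟨⟨x, y⟩, ⟨hxy, hle⟩, hmin⟩ := Set.exists_min_image S (fun p ↦ ‖p.1‖ + ‖p.2‖)
    ((hB.prod hB).subset hSB) ⟨(a, b), h, le_rfl⟩
  refine ⟨x, y, hxy, fun x' y' h' ↦ ?_⟩
  rcases le_total (‖x'‖ + ‖y'‖) (‖a‖ + ‖b‖) with h_small | h_large
  · exact hmin (x', y') ⟨h', h_small⟩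
  · exact hle.trans h_large

theorem exists_reduced (h : IsLatticeBasis G a b) :
    ∃ x y, IsLatticeBasis G x y ∧ ‖x‖ ≤ ‖y‖ ∧ ∀ k : ℤ, ‖y‖ ≤ ‖k • x + y‖ := by
  obtain ⟨x, y, hxy, hmin⟩ := h.exists_minimal_norm_add_norm
  wlog hle : ‖x‖ ≤ ‖y‖ generalizing x y
  · exact this y x hxy.symm (fun x' y' h' ↦ add_comm ‖x‖ ‖y‖ ▸ hmin x' y' h') (le_of_not_ge hle)
  · exact ⟨x, y, hxy, hle,
      fun k ↦ le_of_add_le_add_left (hmin x (k • x + y) (hxy.zsmul_add_right k))⟩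

end IsLatticeBasis

/-- A geometric basis `(x, y)` of a lattice `G` of rank two, in an arbitrary real normed space. -/
structure IsGeometricBasis_s0 {E : Type*} [NormedAddCommGroup E] [NormedSpace ℝ E]
    (G : AddSubgroup E) (x y : E) : Prop extends IsLatticeBasis G x y where
  norm_left_le : ∀ n m : ℤ, (n, m) ≠ (0, 0) → ‖x‖ ≤ ‖n • x + m • y‖
  norm_right_le : ∀ n m : ℤ, m ≠ 0 → ‖y‖ ≤ ‖n • x + m • y‖

theorem IsLatticeBasis.isGeometricBasis {E : Type*} [NormedAddCommGroup E] [NormedSpace ℝ E]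
    {G : AddSubgroup E} {x y : E} (h : IsLatticeBasis G x y) (hxy : ‖x‖ ≤ ‖y‖)
    (hy : ∀ k : ℤ, ‖y‖ ≤ ‖k • x + y‖) : IsGeometricBasis_s0 G x y where
  toIsLatticeBasis := h
  norm_right_le n _ hm := norm_le_norm_zsmul_add_zsmul hxy hy n hm
  norm_left_le n m hnm := by
    rcases eq_or_ne m 0 with rfl | hm
    · have hn : n ≠ 0 := by simpa using hnm
      simpa only [zero_smul, add_zero] using norm_le_norm_zsmul_self hn
    · exact hxy.trans (norm_le_norm_zsmul_add_zsmul hxy hy n hm)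

theorem exists_geometric_basis_general {E : Type*} [NormedAddCommGroup E] [NormedSpace ℝ E]
    (a b : E) (hab : LinearIndependent ℝ ![a, b]) :
    ∃ a' b', IsGeometricBasis_s0 (AddSubgroup.closure {a, b}) a' b' := by
  have h : IsLatticeBasis (AddSubgroup.closure {a, b}) a b := ⟨hab, rfl⟩
  obtain ⟨x, y, hxy, hle, hy⟩ := h.exists_reduced
  exact ⟨x, y, hxy.isGeometricBasis hle hy⟩

/-- A cocompact group of translations of ℂ generated by two ℝ-linearly independent
complex numbers admits a geometric basis. -/
theorem exists_geometric_basis (a b : ℂ) (hab : LinearIndependent ℝ ![a, b]) :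
    ∃ a' b' : ℂ,
      a' ∈ AddSubgroup.closure ({a, b} : Set ℂ) ∧
      b' ∈ AddSubgroup.closure ({a, b} : Set ℂ) ∧
      LinearIndependent ℝ ![a', b'] ∧
      AddSubgroup.closure ({a', b'} : Set ℂ) = AddSubgroup.closure ({a, b} : Set ℂ) ∧
      (∀ n m : ℤ, (n, m) ≠ (0, 0) →
        ‖a'‖ ≤ ‖n • a' + m • b'‖) ∧
      (∀ n m : ℤ, m ≠ 0 →
        ‖b'‖ ≤ ‖n • a' + m • b'‖) := by
  obtain ⟨a', b', h⟩ := exists_geometric_basis_general a b hab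
  exact ⟨a', b', h.left_mem, h.right_mem, h.linearIndependent, h.closure_eq, h.norm_left_le,
    h.norm_right_le⟩
end

section
/- Let a, b ∈ ℂ be nonzero and let t ∈ ℤ. If |t·a + b| ≤ |(t+1)·a + b|, then either |(t−1)·a + b| < |t·a + b|, or |t·a + b| ≤ |n·a + b| for every integer n (i.e., t is a global integer minimizer of n ↦ |n·a + b|). -/
/-! In a real normed space, `r ↦ ‖r • a + b‖` is convex on `ℝ`, being a norm composed with an affine
map. If `f` is convex and `f x ≤ f v` for some `v > x`, then `f` is nondecreasing from `v` on, and
symmetrically on the left. So an integer at which `f` is no larger than at its two neighbours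
minimizes `f` over all integers, as it is the only one strictly between these neighbours. -/

section ConvexOn

variable {𝕜 β : Type*} [Field 𝕜] [LinearOrder 𝕜] [IsStrictOrderedRing 𝕜]
  [AddCommMonoid β] [LinearOrder β] [IsOrderedCancelAddMonoid β] [Module 𝕜 β]
  [PosSMulStrictMono 𝕜 β] {f : 𝕜 → β}

theorem le_of_convexOn_of_notMem_Ioo {s : Set 𝕜} (hf : ConvexOn 𝕜 s f) {u v x y : 𝕜}
    (hu : u ∈ s) (hv : v ∈ s) (hy : y ∈ s) (hx : x ∈ Set.Ioo u v) (hyuv : y ∉ Set.Ioo u v)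
    (hxu : f x ≤ f u) (hxv : f x ≤ f v) : f x ≤ f y := by
  have hxs : x ∈ s := hf.1.ordConnected.out hu hv (Set.Ioo_subset_Icc_self hx)
  rcases le_or_gt y u with hyu | huy
  · exact hxu.trans (hf.le_left_of_right_le'' hy hxs hyu hx.1 hxu)
  · have hvy : v ≤ y := not_lt.1 fun hyv => hyuv ⟨huy, hyv⟩
    exact hxv.trans (hf.le_right_of_left_le'' hxs hy hx.2 hvy hxv)

theorem le_intCast_of_convexOn_of_le_neighbors (hf : ConvexOn 𝕜 Set.univ f) {t : ℤ}
    (hpred : f t ≤ f (t - 1 : ℤ)) (hsucc : f t ≤ f (t + 1 : ℤ)) (n : ℤ) : f t ≤ f n := by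
  obtain rfl | hnt := eq_or_ne n t
  · rfl
  · have ht : (t : 𝕜) ∈ Set.Ioo ((t - 1 : ℤ) : 𝕜) (t + 1 : ℤ) := by
      simp only [Set.mem_Ioo, Int.cast_lt]
      omega
    have hn : (n : 𝕜) ∉ Set.Ioo ((t - 1 : ℤ) : 𝕜) (t + 1 : ℤ) := by
      simp only [Set.mem_Ioo, Int.cast_lt]
      omega
    exact le_of_convexOn_of_notMem_Ioo hf trivial trivial trivial ht hn hpred hsucc

end ConvexOn

section Norm

variable {E : Type*} [SeminormedAddCommGroup E] [NormedSpace ℝ E]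

theorem convexOn_norm_smul_add (a b : E) :
    ConvexOn ℝ Set.univ fun r : ℝ => ‖r • a + b‖ :=
  ((convexOn_univ_norm (E := E)).translate_left b).comp_linearMap (LinearMap.toSpanSingleton ℝ E a)

theorem local_min_is_global_min_general (a b : E) (t : ℤ)
    (h : ‖t • a + b‖ ≤ ‖(t + 1) • a + b‖) :
    ‖(t - 1) • a + b‖ < ‖t • a + b‖ ∨ ∀ n : ℤ, ‖t • a + b‖ ≤ ‖n • a + b‖ := by
  refine or_iff_not_imp_left.2 fun hpred n => ?_
  simp only [not_lt, ← Int.cast_smul_eq_zsmul ℝ] at h hpred ⊢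
  exact le_intCast_of_convexOn_of_le_neighbors (convexOn_norm_smul_add a b) hpred h n

end Norm

/-- For nonzero a, b ∈ ℂ and t ∈ ℤ: if |t·a + b| ≤ |(t+1)·a + b|, then either
|(t−1)·a + b| < |t·a + b| or t is a global integer minimizer of n ↦ |n·a + b|. -/
theorem local_min_is_global_min (a b : ℂ) (ha : a ≠ 0) (hb : b ≠ 0) (t : ℤ)
    (h : ‖t • a + b‖ ≤ ‖(t + 1) • a + b‖) :
    ‖(t - 1) • a + b‖ < ‖t • a + b‖ ∨
    ∀ n : ℤ, ‖t • a + b‖ ≤ ‖n • a + b‖ :=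
  local_min_is_global_min_general a b t h
end

section
/- Let G₁ be a subgroup of (ℂ, +) generated over ℤ by two ℝ-linearly independent complex numbers, with geometric basis (a₁, b₁), and let G₂ be a subgroup of G₁ of index 2 with geometric basis (a₂, b₂). If |a₂| = 2 and |b₂| > 16, then |a₁| > 6 or |b₁| > 6. -/
/-- A geometric basis for a cocompact group of translations `G` of ℂ. -/
def IsGeometricBasis (G : AddSubgroup ℂ) (a b : ℂ) : Prop :=
  LinearIndependent ℝ ![a, b] ∧
  AddSubgroup.closure ({a, b} : Set ℂ) = G ∧
  (∀ n m : ℤ, (n, m) ≠ (0, 0) → ‖a‖ ≤ ‖n • a + m • b‖) ∧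
  (∀ n m : ℤ, m ≠ 0 → ‖b‖ ≤ ‖n • a + m • b‖)

/-! An element of a lattice strictly shorter than the second vector `b` of a geometric basis
`(a, b)` is an integer multiple of `a`, so of any two independent elements one is at least as long
as `b`. A subgroup of index `n` contains `n • x` for every `x` in the ambient lattice; applied to
the two independent vectors `n • a₁` and `n • b₁`, this gives `‖b₂‖ ≤ n * ‖b₁‖`. -/

theorem not_linearIndependent_pair_of_mem_span_singleton {R M : Type*} [Ring R]
    [StrongRankCondition R] [AddCommGroup M] [Module R M] {x y z : M}
    (hx : x ∈ Submodule.span R {z}) (hy : y ∈ Submodule.span R {z}) :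
    ¬ LinearIndependent R ![x, y] := by
  intro hxy
  have hcard : Cardinal.mk (Fin 2) ≤ Fintype.card ({z} : Set M) :=
    linearIndependent_le_span' ![x, y] hxy {z} (by simp [Set.insert_subset_iff, hx, hy])
  simp at hcard

namespace IsGeometricBasis

variable {G : AddSubgroup ℂ} {a b : ℂ}

theorem left_mem (h : IsGeometricBasis G a b) : a ∈ G :=
  h.2.1 ▸ AddSubgroup.mem_closure_of_mem (Set.mem_insert a {b})

theorem right_mem (h : IsGeometricBasis G a b) : b ∈ G :=
  h.2.1 ▸ AddSubgroup.mem_closure_of_mem (Set.mem_insert_of_mem a rfl)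

theorem norm_left_le_norm_right (h : IsGeometricBasis G a b) : ‖a‖ ≤ ‖b‖ := by
  simpa using h.2.2.1 0 1 (by simp)

theorem mem_zmultiples_of_norm_lt (h : IsGeometricBasis G a b) {x : ℂ} (hx : x ∈ G)
    (hxb : ‖x‖ < ‖b‖) : x ∈ AddSubgroup.zmultiples a := by
  obtain ⟨-, rfl, -, hb⟩ := h
  obtain ⟨n, m, rfl⟩ := AddSubgroup.mem_closure_pair.mp hx
  have hm : m = 0 := by
    by_contra hm
    exact (hb n m hm).not_gt hxb
  exact ⟨n, by simp [hm]⟩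

theorem norm_right_le_max (h : IsGeometricBasis G a b) {x y : ℂ} (hx : x ∈ G) (hy : y ∈ G)
    (hxy : LinearIndependent ℝ ![x, y]) : ‖b‖ ≤ max ‖x‖ ‖y‖ := by
  by_contra! hlt
  obtain ⟨hxb, hyb⟩ := max_lt_iff.mp hlt
  have hspan : AddSubgroup.zmultiples a ≤ (Submodule.span ℝ {a}).toAddSubgroup :=
    AddSubgroup.zmultiples_le_of_mem (Submodule.mem_span_singleton_self a)
  exact not_linearIndependent_pair_of_mem_span_singleton
    (hspan (h.mem_zmultiples_of_norm_lt hx hxb)) (hspan (h.mem_zmultiples_of_norm_lt hy hyb)) hxy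

end IsGeometricBasis

theorem geometric_basis_length_bound_general {G₁ G₂ : AddSubgroup ℂ} {a₁ b₁ a₂ b₂ : ℂ}
    (h₁ : IsGeometricBasis G₁ a₁ b₁) (hidx : G₂.relIndex G₁ ≠ 0)
    (h₂ : IsGeometricBasis G₂ a₂ b₂) : ‖b₂‖ ≤ G₂.relIndex G₁ * ‖b₁‖ := by
  set n := G₂.relIndex G₁
  have hmul {x : ℂ} (hx : x ∈ G₁) : (n : ℝ) • x ∈ G₂ := by
    rw [Nat.cast_smul_eq_nsmul]
    exact G₂.nsmul_relIndex_mem hx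
  have hindep : LinearIndependent ℝ ![(n : ℝ) • a₁, (n : ℝ) • b₁] :=
    (LinearIndependent.pair_smul_iff (Nat.cast_ne_zero.mpr hidx)).mpr h₁.1
  calc ‖b₂‖ ≤ max ‖(n : ℝ) • a₁‖ ‖(n : ℝ) • b₁‖ :=
        h₂.norm_right_le_max (hmul h₁.left_mem) (hmul h₁.right_mem) hindep
    _ = n * max ‖a₁‖ ‖b₁‖ := by
        simp only [norm_smul, Real.norm_natCast, mul_max_of_nonneg _ _ n.cast_nonneg]
    _ = n * ‖b₁‖ := by rw [max_eq_right h₁.norm_left_le_norm_right]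

/-- Lemma 5.2: if an index-2 subgroup has a geometric basis with |a₂| = 2 and |b₂| > 16,
then the ambient lattice has a geometric basis element of length > 6. -/
theorem geometric_basis_length_bound (G₁ G₂ : AddSubgroup ℂ) (a₁ b₁ a₂ b₂ : ℂ)
    (h₁ : IsGeometricBasis G₁ a₁ b₁)
    (hle : G₂ ≤ G₁) (hidx : G₂.relIndex G₁ = 2)
    (h₂ : IsGeometricBasis G₂ a₂ b₂)
    (ha₂ : ‖a₂‖ = 2) (hb₂ : ‖b₂‖ > 16) :
    ‖a₁‖ > 6 ∨ ‖b₁‖ > 6 := by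
  have hbound : ‖b₂‖ ≤ 2 * ‖b₁‖ := by
    simpa [hidx] using geometric_basis_length_bound_general h₁ (by simp [hidx]) h₂
  exact Or.inr (by linarith)
end

section
/- Let θ ∈ ℝ with π/4 ≤ θ ≤ π/2, let r ∈ ℝ with r ≥ 1 and 2·r·sin θ ≤ 6, and let q ∈ ℤ with q ≥ 3. Then |r·e^{iθ} + 2q|² / (2·r·sin θ) ≥ 2(q−1)²/3; equivalently, (2·r·sin θ)/|r·e^{iθ} + 2q|² ≤ 3/(2(q−1)²). -/
/-!
Write `μ = r e^{iθ}`. Projecting `μ + 2q` to the direction of the longitude gives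
`‖μ + 2q‖ ≥ Re μ + 2q`, which is at least `2(q - t)` as soon as `Re μ ≥ -2t`. As the area
`2 r sin θ` is at most `6`, the normalized length squared is at least `4(q - t)² / 6`. The angle
bounds make `Re μ` nonnegative, so `t = 1` is admissible.
-/

/-- The squared normalized length of a closed geodesic with translation vector `s` on the flat
torus `ℂ / (ℤℓ + ℤμ)`, that is, its squared length divided by the area of the torus. The torus is
rotated so that its longitude is a positive real `ℓ` and its meridian `μ` lies in the upper
half-plane; the area is then `ℓ * μ.im`. -/
noncomputable def normalizedLengthSq (ℓ : ℝ) (μ s : ℂ) : ℝ :=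
  ‖s‖ ^ 2 / (ℓ * μ.im)

section

variable {ℓ t q : ℝ} {μ : ℂ}

lemma mul_sub_le_norm_add_mul (hre : -(ℓ * t) ≤ μ.re) : ℓ * (q - t) ≤ ‖μ + ℓ * q‖ :=
  calc
    ℓ * (q - t) ≤ μ.re + ℓ * q := by linarith
    _ = (μ + ℓ * q).re := by simp
    _ ≤ ‖μ + ℓ * q‖ := Complex.re_le_norm _

lemma sq_mul_sub_div_le_normalizedLengthSq {A : ℝ} (hℓ : 0 < ℓ) (him : 0 < μ.im)
    (hA : ℓ * μ.im ≤ A) (hre : -(ℓ * t) ≤ μ.re) (hq : t ≤ q) :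
    (ℓ * (q - t)) ^ 2 / A ≤ normalizedLengthSq ℓ μ (μ + ℓ * q) := by
  have hlength : 0 ≤ ℓ * (q - t) := mul_nonneg hℓ.le (sub_nonneg.mpr hq)
  have harea : 0 < ℓ * μ.im := mul_pos hℓ him
  exact div_le_div₀ (sq_nonneg _) (pow_le_pow_left₀ hlength (mul_sub_le_norm_add_mul hre) 2)
    harea hA

end

theorem octahedral_cusp_slope_bound_general {θ r t q : ℝ} (hθ₀ : 0 < θ) (hθπ : θ < Real.pi)
    (hr : 0 < r) (hre : -(2 * t) ≤ r * Real.cos θ) (hrs : 2 * r * Real.sin θ ≤ 6) (hq : t < q) :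
    ‖(r : ℂ) * Complex.exp ((θ : ℂ) * Complex.I) + 2 * (q : ℂ)‖ ^ 2
        / (2 * r * Real.sin θ) ≥ 2 * (q - t) ^ 2 / 3 ∧
    (2 * r * Real.sin θ)
        / ‖(r : ℂ) * Complex.exp ((θ : ℂ) * Complex.I) + 2 * (q : ℂ)‖ ^ 2 ≤
      3 / (2 * (q - t) ^ 2) := by
  set μ : ℂ := r * Complex.exp (θ * Complex.I) with hμ
  have hμre : μ.re = r * Real.cos θ := by
    rw [hμ, Complex.re_ofReal_mul, Complex.exp_ofReal_mul_I_re]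
  have hμim : μ.im = r * Real.sin θ := by
    rw [hμ, Complex.im_ofReal_mul, Complex.exp_ofReal_mul_I_im]
  have hbound : 2 * (q - t) ^ 2 / 3 ≤ ‖μ + 2 * q‖ ^ 2 / (2 * r * Real.sin θ) :=
    calc
      2 * (q - t) ^ 2 / 3 = (2 * (q - t)) ^ 2 / 6 := by ring
      _ ≤ normalizedLengthSq 2 μ (μ + (2 : ℝ) * q) :=
        sq_mul_sub_div_le_normalizedLengthSq two_pos
          (hμim ▸ mul_pos hr (Real.sin_pos_of_pos_of_lt_pi hθ₀ hθπ))
          (by rwa [hμim, ← mul_assoc]) (hμre ▸ hre) hq.le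
      _ = ‖μ + 2 * q‖ ^ 2 / (2 * r * Real.sin θ) := by
        rw [normalizedLengthSq, hμim, ← mul_assoc, Complex.ofReal_ofNat]
  have hpos : 0 < 2 * (q - t) ^ 2 / 3 := by
    have := sub_pos.mpr hq
    positivity
  exact ⟨hbound, by simpa only [inv_div] using inv_anti₀ hpos hbound⟩

/-- The normalized length bound for the slope 1/q on a crossing circle cusp of the
octahedral FAL L₄: under the rigorously verified cusp-shape bounds, the normalized length
squared of the slope μ + 2q is at least 2(q−1)²/3. -/
theorem octahedral_cusp_slope_bound (θ r : ℝ) (q : ℤ)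
    (hθ₁ : Real.pi / 4 ≤ θ) (hθ₂ : θ ≤ Real.pi / 2)
    (hr : 1 ≤ r) (hrs : 2 * r * Real.sin θ ≤ 6) (hq : 3 ≤ q) :
    ‖(r : ℂ) * Complex.exp ((θ : ℂ) * Complex.I) + 2 * (q : ℂ)‖ ^ 2
        / (2 * r * Real.sin θ) ≥ 2 * ((q : ℝ) - 1) ^ 2 / 3 ∧
    (2 * r * Real.sin θ)
        / ‖(r : ℂ) * Complex.exp ((θ : ℂ) * Complex.I) + 2 * (q : ℂ)‖ ^ 2 ≤
      3 / (2 * ((q : ℝ) - 1) ^ 2) := by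
  have hre : 0 ≤ r * Real.cos θ :=
    mul_nonneg (by linarith) (Real.cos_nonneg_of_mem_Icc ⟨by linarith [Real.pi_pos], hθ₂⟩)
  have hq' : (1 : ℝ) < q := by exact_mod_cast (by lia : 1 < q)
  simpa only [Complex.ofReal_intCast] using octahedral_cusp_slope_bound_general (t := 1)
    (by linarith [Real.pi_pos]) (by linarith [Real.pi_pos]) (by linarith) (by linarith) hrs hq'
end
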